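/- Let H and K be complex Hilbert spaces, A a densely defined self-adjoint operator in H, and R(z), Im z ≠ 0, its resolvent. Let G assign to each nonreal z a bounded linear operator G(z) : K → H such that: (a) G(z) = G(z₀) + (z − z₀)R(z)G(z₀) for all nonreal z, z₀; (b) G(z) is injective for every nonreal z; (c) for every nonreal z₀ the intersection of the domain of A with the closure of the range of G(z₀) is {0}. Let Q assign to each nonreal z a bounded linear operator Q(z) on K such that Q(z)* = Q(z̄) for every nonreal z and Q(z) − Q(z₀) = (z − z₀)·G(z̄₀)*G(z) for all nonreal z, z₀. Let L be a densely defined self-adjoint operator in K such that for every nonreal z the operator Q(z) + L is boundedly invertible, meaning there is a bounded operator Γ(z) on K whose range is contained in the domain of L with (Q(z) + L)(Γ(z)k) = k for all k ∈ K and Γ(z)(Q(z)u + Lu) = u for all u in the domain of L. Then the operator function R_L(z) = R(z) − G(z)Γ(z)G(z̄)*, Im z ≠ 0, is the resolvent of a densely defined self-adjoint operator A₁ in H which is a singular perturbation of A: the intersection of the domains of A and A₁ is dense in H and A₁x = Ax for every x in that intersection. -/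

import Mathlib

open MeasureTheory Complex ContinuousLinearMap

/-!
A family `S z` of bounded operators is the resolvent of an operator as soon as it satisfies the
resolvent identity and is injective at one point; that operator is symmetric iff `(S z)* = S z̄`,
and a symmetric operator with a resolvent is self-adjoint because `A - z` and `A - z̄` are onto.
For `S z = R z - G z Γ z (G z̄)*` the resolvent identity follows by expanding the product and using
`Γ z (Q z - Q w) Γ w = Γ w - Γ z`. Finally `R z - S z` takes values in the range of `G z`, whose
closure meets the domain of `A` only in `0`. This transversality gives injectivity of `S z`,
forces `R z h = S z h` whenever `S z h` lies in the domain of `A`, and, applied to the orthogonal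
complement of the kernel of `(R z - S z)*`, makes the common domain dense.
-/

open scoped InnerProductSpace ComplexConjugate

section SelfAdjointnessCriterion

variable {𝕜 E : Type*} [RCLike 𝕜] [NormedAddCommGroup E] [InnerProductSpace 𝕜 E] [CompleteSpace E]
  {A : E →ₗ.[𝕜] E} {z : 𝕜}

theorem dense_domain_of_isFormalAdjoint_of_surjective (hA : A.IsFormalAdjoint A)
    (hz : ∀ y, ∃ x : A.domain, A x - z • (x : E) = y)
    (hz' : ∀ y, ∃ x : A.domain, A x - conj z • (x : E) = y) :
    Dense (A.domain : Set E) := by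
  rw [Submodule.dense_iff_topologicalClosure_eq_top, Submodule.topologicalClosure_eq_top_iff,
    Submodule.eq_bot_iff]
  intro y hy
  obtain ⟨x, rfl⟩ := hz' y
  obtain ⟨u, hu⟩ := hz x
  have hx : (x : E) = 0 := by
    rw [← inner_self_eq_zero (𝕜 := 𝕜)]
    calc ⟪(x : E), x⟫_𝕜 = ⟪A u - z • (u : E), x⟫_𝕜 := by rw [hu]
      _ = ⟪(u : E), A x - conj z • (x : E)⟫_𝕜 := by
        rw [inner_sub_left, inner_sub_right, hA u x, inner_smul_left, inner_smul_right]
      _ = 0 := (Submodule.mem_orthogonal _ _).1 hy _ u.2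
  have hx' : x = 0 := Subtype.ext hx
  simp only [hx', LinearPMap.map_zero, ZeroMemClass.coe_zero, smul_zero, sub_zero]

theorem adjoint_eq_self_of_isFormalAdjoint_of_surjective (hA : A.IsFormalAdjoint A)
    (hz : ∀ y, ∃ x : A.domain, A x - z • (x : E) = y)
    (hz' : ∀ y, ∃ x : A.domain, A x - conj z • (x : E) = y) :
    A.adjoint = A := by
  have hdense := dense_domain_of_isFormalAdjoint_of_surjective hA hz hz'
  have hle : A ≤ A.adjoint := hA.le_adjoint hdense
  refine (LinearPMap.eq_of_le_of_domain_eq hle (le_antisymm hle.1 fun y hy => ?_)).symm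
  obtain ⟨x, hx⟩ := hz' (A.adjoint ⟨y, hy⟩ - conj z • y)
  obtain ⟨u, hu⟩ := hz (x - y)
  have hadj : ⟪A u, y⟫_𝕜 = ⟪(u : E), A.adjoint ⟨y, hy⟩⟫_𝕜 :=
    (A.adjoint_isFormalAdjoint hdense).symm u ⟨y, hy⟩
  have hxy : (x : E) - y = 0 := by
    rw [← inner_self_eq_zero (𝕜 := 𝕜)]
    calc ⟪(x : E) - y, (x : E) - y⟫_𝕜 = ⟪A u - z • (u : E), (x : E) - y⟫_𝕜 := by rw [hu]
      _ = ⟪(u : E), (A x - conj z • (x : E)) - (A.adjoint ⟨y, hy⟩ - conj z • y)⟫_𝕜 := by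
        simp only [inner_sub_left, inner_sub_right, inner_smul_left, inner_smul_right, hA u x, hadj]
      _ = 0 := by rw [← hx, sub_self, inner_zero_right]
  exact sub_eq_zero.1 hxy ▸ x.2

end SelfAdjointnessCriterion

section Resolvent

variable {E : Type*} [NormedAddCommGroup E] [NormedSpace ℂ E]

/-- `R` is the resolvent of `A`: for nonreal `z` the operator `R z` is a bijection from the whole
space onto the domain of `A` with `(A - z) (R z) = 1`. Values at real `z` are irrelevant. -/
def IsResolvent (A : E →ₗ.[ℂ] E) (R : ℂ → E →L[ℂ] E) : Prop :=
  ∀ z : ℂ, z.im ≠ 0 →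
    Function.Injective (R z) ∧ Set.range (R z) = (A.domain : Set E) ∧
    (∀ (h : E) (hm : R z h ∈ A.domain), A ⟨R z h, hm⟩ - z • R z h = h)

/-- The resolvent identity `S z - S w = (z - w) S z S w` at nonreal points, which makes sense
before `S` is known to be the resolvent of an operator. -/
def IsPseudoResolvent (S : ℂ → E →L[ℂ] E) : Prop :=
  ∀ z w : ℂ, z.im ≠ 0 → w.im ≠ 0 → S z - S w = (z - w) • (S z ∘L S w)

/-- `A₁` is a singular perturbation of `A`: the two operators agree on a dense common domain. -/
def IsSingularPerturbation (A A₁ : E →ₗ.[ℂ] E) : Prop :=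
  Dense ((A.domain : Set E) ∩ (A₁.domain : Set E)) ∧
    ∀ (x : E) (h1 : x ∈ A.domain) (h2 : x ∈ A₁.domain), A₁ ⟨x, h2⟩ = A ⟨x, h1⟩

/-- The operator `T⁻¹ + z` with domain the range of `T`, which is the operator whose resolvent at
`z` is `T`. It is meaningful only for injective `T`. -/
noncomputable def operatorOfResolventAt (T : E →L[ℂ] E) (z : ℂ) : E →ₗ.[ℂ] E :=
  (z • (LinearMap.id : E →ₗ[ℂ] E)) +ᵥ (T.toLinearMap.toPMap ⊤).inverse

variable {A : E →ₗ.[ℂ] E} {R S : ℂ → E →L[ℂ] E} {T : E →L[ℂ] E} {z w : ℂ}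

theorem IsResolvent.mem_domain (hR : IsResolvent A R) (hz : z.im ≠ 0) (h : E) :
    R z h ∈ A.domain := by
  rw [← SetLike.mem_coe, ← (hR z hz).2.1]
  exact Set.mem_range_self h

theorem IsResolvent.exists_apply_eq (hR : IsResolvent A R) (hz : z.im ≠ 0) {x : E}
    (hx : x ∈ A.domain) : ∃ h, R z h = x := by
  rwa [← SetLike.mem_coe, ← (hR z hz).2.1] at hx

theorem IsResolvent.apply_eq (hR : IsResolvent A R) (hz : z.im ≠ 0) {h : E} {x : A.domain}
    (hx : R z h = x) : A x = h + z • (x : E) := by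
  obtain ⟨_, hm⟩ := x
  subst hx
  exact sub_eq_iff_eq_add.1 ((hR z hz).2.2 h hm)

theorem IsResolvent.exists_sub_smul_eq (hR : IsResolvent A R) (hz : z.im ≠ 0) (h : E) :
    ∃ x : A.domain, A x - z • (x : E) = h :=
  ⟨⟨R z h, hR.mem_domain hz h⟩, (hR z hz).2.2 h _⟩

theorem IsResolvent.isPseudoResolvent (hR : IsResolvent A R) : IsPseudoResolvent R := by
  intro z w hz hw
  ext h
  obtain ⟨k, hk⟩ := hR.exists_apply_eq hz (hR.mem_domain hw h)
  have hA : h + w • R w h = k + z • R w h := by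
    let x : A.domain := ⟨R w h, hR.mem_domain hw h⟩
    exact (hR.apply_eq hw (x := x) rfl).symm.trans (hR.apply_eq hz hk)
  have hh : h = k + (z - w) • R w h := by
    linear_combination (norm := module) hA
  calc R z h - R w h = R z (k + (z - w) • R w h) - R w h := by rw [← hh]
    _ = (z - w) • R z (R w h) := by rw [map_add, map_smul, hk, add_sub_cancel_left]

theorem IsResolvent.injective_of_disjoint (hR : IsResolvent A R) (hz : z.im ≠ 0)
    (hdisj : Disjoint A.domain (R z - T).range) : Function.Injective T := by
  rw [injective_iff_map_eq_zero]
  intro h hT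
  have hRh : R z h ∈ (R z - T).range := ⟨h, by simp [hT]⟩
  have hRh_zero := Submodule.disjoint_def.1 hdisj _ (hR.mem_domain hz h) hRh
  exact (hR z hz).1 (hRh_zero.trans (map_zero _).symm)

theorem IsPseudoResolvent.apply_eq (hS : IsPseudoResolvent S) (hz : z.im ≠ 0) (hw : w.im ≠ 0)
    (h : E) : S z h = S w (h + (z - w) • S z h) := by
  have hzw : S w h - S z h = (w - z) • S w (S z h) := DFunLike.congr_fun (hS w z hw hz) h
  rw [map_add, map_smul]
  linear_combination (norm := module) -hzw

theorem IsPseudoResolvent.injective (hS : IsPseudoResolvent S) (hz : z.im ≠ 0)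
    (hinj : Function.Injective (S z)) (hw : w.im ≠ 0) : Function.Injective (S w) := by
  rw [injective_iff_map_eq_zero] at hinj ⊢
  intro h hwh
  apply hinj
  simpa [hwh] using (hS.apply_eq hw hz h).symm

theorem IsPseudoResolvent.range_eq (hS : IsPseudoResolvent S) (hz : z.im ≠ 0) (hw : w.im ≠ 0) :
    Set.range (S z) = Set.range (S w) := by
  apply Set.Subset.antisymm
  · rintro _ ⟨h, rfl⟩
    exact ⟨_, (hS.apply_eq hz hw h).symm⟩
  · rintro _ ⟨h, rfl⟩
    exact ⟨_, (hS.apply_eq hw hz h).symm⟩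

theorem coe_domain_operatorOfResolventAt (T : E →L[ℂ] E) (z : ℂ) :
    ((operatorOfResolventAt T z).domain : Set E) = Set.range T := by
  rw [operatorOfResolventAt, LinearPMap.vadd_domain, LinearPMap.inverse_domain, LinearMap.coe_range]
  exact (Set.range_comp T Subtype.val).trans (by simp)

theorem operatorOfResolventAt_apply (hT : Function.Injective T) {h : E}
    {x : (operatorOfResolventAt T z).domain} (hx : T h = x) :
    operatorOfResolventAt T z x = h + z • (x : E) := by
  have hker : (T.toLinearMap.toPMap ⊤).toFun.ker = ⊥ :=
    LinearMap.ker_eq_bot.2 (hT.comp Subtype.val_injective)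
  have hinv : (T.toLinearMap.toPMap ⊤).inverse x = h :=
    LinearPMap.inverse_apply_eq hker (x := ⟨h, Submodule.mem_top⟩) hx
  rw [add_comm, ← hinv]
  rfl

theorem IsPseudoResolvent.isResolvent_operatorOfResolventAt (hS : IsPseudoResolvent S)
    (hw : w.im ≠ 0) (hinj : Function.Injective (S w)) :
    IsResolvent (operatorOfResolventAt (S w) w) S := by
  refine fun z hz => ⟨hS.injective hw hinj hz, ?_, fun h hm => ?_⟩
  · rw [coe_domain_operatorOfResolventAt, hS.range_eq hz hw]
  · rw [operatorOfResolventAt_apply hinj (hS.apply_eq hz hw h).symm]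
    module

end Resolvent

section SymmetricResolvent

variable {H : Type*} [NormedAddCommGroup H] [InnerProductSpace ℂ H] [CompleteSpace H]
  {A A₁ : H →ₗ.[ℂ] H} {R S : ℂ → H →L[ℂ] H} {z : ℂ}

theorem conj_im_ne_zero (hz : z.im ≠ 0) : (conj z).im ≠ 0 := by
  rwa [conj_im, neg_ne_zero]

theorem IsResolvent.adjoint_eq (hR : IsResolvent A R) (hA : A.IsFormalAdjoint A)
    (hz : z.im ≠ 0) : adjoint (R z) = R (conj z) := by
  refine ((eq_adjoint_iff _ _).2 fun k h => ?_).symm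
  have hz' := conj_im_ne_zero hz
  have hsymm := hA ⟨R (conj z) k, hR.mem_domain hz' k⟩ ⟨R z h, hR.mem_domain hz h⟩
  rw [hR.apply_eq hz' rfl, hR.apply_eq hz rfl] at hsymm
  simp only [inner_add_left, inner_add_right, inner_smul_left, inner_smul_right, conj_conj]
    at hsymm
  linear_combination -hsymm

theorem IsResolvent.isFormalAdjoint (hS : IsResolvent A S) (hz : z.im ≠ 0)
    (hadj : adjoint (S z) = S (conj z)) : A.IsFormalAdjoint A := by
  rintro ⟨x, hx⟩ ⟨y, hy⟩
  have hz' := conj_im_ne_zero hz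
  obtain ⟨h, rfl⟩ := hS.exists_apply_eq hz hx
  obtain ⟨k, rfl⟩ := hS.exists_apply_eq hz' hy
  have hswap : ⟪S z h, k⟫_ℂ = ⟪h, S (conj z) k⟫_ℂ := by rw [← hadj, adjoint_inner_right]
  rw [hS.apply_eq hz rfl, hS.apply_eq hz' rfl, inner_add_left, inner_add_right, inner_smul_left,
    inner_smul_right, hswap]

theorem IsResolvent.adjoint_operator_eq_self (hR : IsResolvent A R) (hA : A.IsFormalAdjoint A) :
    A.adjoint = A :=
  adjoint_eq_self_of_isFormalAdjoint_of_surjective hA (hR.exists_sub_smul_eq (z := I) (by simp))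
    (hR.exists_sub_smul_eq (by simp))

theorem IsResolvent.dense_domain_inf_domain (hR : IsResolvent A R) (hA : A.IsFormalAdjoint A)
    (hS : IsResolvent A₁ S) (hA₁ : A₁.IsFormalAdjoint A₁) (hz : z.im ≠ 0)
    (hdisj : Disjoint A.domain (R z - S z).range.topologicalClosure) :
    Dense ((A.domain ⊓ A₁.domain : Submodule ℂ H) : Set H) := by
  rw [Submodule.dense_iff_topologicalClosure_eq_top, Submodule.topologicalClosure_eq_top_iff,
    Submodule.eq_bot_iff]
  intro y hy
  have hz' := conj_im_ne_zero hz
  have hRy : R z y ∈ (R z - S z).range.topologicalClosure := by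
    rw [← Submodule.orthogonal_orthogonal_eq_closure, orthogonal_range, map_sub,
      hR.adjoint_eq hA hz, hS.adjoint_eq hA₁ hz, Submodule.mem_orthogonal]
    intro u hu
    have hRSu : R (conj z) u = S (conj z) u := sub_eq_zero.1 hu
    have hmem : R (conj z) u ∈ A.domain ⊓ A₁.domain :=
      ⟨hR.mem_domain hz' u, hRSu ▸ hS.mem_domain hz' u⟩
    rw [← adjoint_inner_left, hR.adjoint_eq hA hz]
    exact (Submodule.mem_orthogonal _ _).1 hy _ hmem
  have hRy_zero := Submodule.disjoint_def.1 hdisj _ (hR.mem_domain hz y) hRy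
  exact (hR z hz).1 (hRy_zero.trans (map_zero _).symm)

theorem IsResolvent.isSingularPerturbation (hR : IsResolvent A R) (hA : A.IsFormalAdjoint A)
    (hS : IsResolvent A₁ S) (hA₁ : A₁.IsFormalAdjoint A₁) (hz : z.im ≠ 0)
    (hdisj : Disjoint A.domain (R z - S z).range.topologicalClosure) :
    IsSingularPerturbation A A₁ := by
  refine ⟨hR.dense_domain_inf_domain hA hS hA₁ hz hdisj, fun x hx hx₁ => ?_⟩
  obtain ⟨h, hSh⟩ := hS.exists_apply_eq hz hx₁
  have hsub : R z h - S z h ∈ A.domain :=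
    A.domain.sub_mem (hR.mem_domain hz h) (hSh ▸ hx)
  have hRSh : R z h - S z h = 0 :=
    Submodule.disjoint_def.1 hdisj _ hsub (Submodule.le_topologicalClosure _ ⟨h, rfl⟩)
  rw [hS.apply_eq hz (x := ⟨x, hx₁⟩) hSh,
    hR.apply_eq hz (x := ⟨x, hx⟩) ((sub_eq_zero.1 hRSh).trans hSh)]

end SymmetricResolvent

section KreinData

variable {E F : Type*} [NormedAddCommGroup E] [NormedSpace ℂ E] [NormedAddCommGroup F]
  [NormedSpace ℂ F]

/-- A `γ`-field of the resolvent `R`: the family `G` propagates from one nonreal point to another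
by `1 + (z - z₀) R z`. -/
def IsGammaField (R : ℂ → E →L[ℂ] E) (G : ℂ → F →L[ℂ] E) : Prop :=
  ∀ z z₀ : ℂ, z.im ≠ 0 → z₀.im ≠ 0 → G z = G z₀ + (z - z₀) • ((R z).comp (G z₀))

/-- `Γ z` is the bounded two-sided inverse of `Q z + L`, an operator with the domain of `L`. -/
def IsInverseOfAdd (Q : ℂ → F →L[ℂ] F) (L : F →ₗ.[ℂ] F) (Γ : ℂ → F →L[ℂ] F) : Prop :=
  ∀ z : ℂ, z.im ≠ 0 →
    (∀ k : F, Γ z k ∈ L.domain) ∧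
    (∀ (k : F) (hm : Γ z k ∈ L.domain), Q z (Γ z k) + L ⟨Γ z k, hm⟩ = k) ∧
    (∀ u : L.domain, Γ z (Q z (u : F) + L u) = (u : F))

variable {Q Γ : ℂ → F →L[ℂ] F} {L : F →ₗ.[ℂ] F} {z w : ℂ}

theorem IsInverseOfAdd.apply_sub_apply (hΓ : IsInverseOfAdd Q L Γ) (hz : z.im ≠ 0)
    (hw : w.im ≠ 0) (k : F) : Γ z ((Q z - Q w) (Γ w k)) = Γ w k - Γ z k := by
  obtain ⟨hmem, hright, -⟩ := hΓ w hw
  have hleft : Γ z (Q z (Γ w k) + L ⟨Γ w k, hmem k⟩) = Γ w k := (hΓ z hz).2.2 ⟨_, hmem k⟩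
  calc Γ z ((Q z - Q w) (Γ w k))
      = Γ z ((Q z (Γ w k) + L ⟨Γ w k, hmem k⟩) - (Q w (Γ w k) + L ⟨Γ w k, hmem k⟩)) := by
        rw [add_sub_add_right_eq_sub, sub_apply]
    _ = Γ w k - Γ z k := by rw [map_sub, hleft, hright]

end KreinData

section KreinFormula

variable {H K : Type*} [NormedAddCommGroup H] [InnerProductSpace ℂ H] [CompleteSpace H]
  [NormedAddCommGroup K] [InnerProductSpace ℂ K] [CompleteSpace K]

/-- A `Q`-function of the `γ`-field `G`, in the sense of Krein: an operator function,
symmetric under conjugation of `z`, whose increments are the Gram operators of `G`. -/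
def IsQFunction (G : ℂ → K →L[ℂ] H) (Q : ℂ → K →L[ℂ] K) : Prop :=
  (∀ z : ℂ, z.im ≠ 0 → adjoint (Q z) = Q (conj z)) ∧
    ∀ z z₀ : ℂ, z.im ≠ 0 → z₀.im ≠ 0 →
      Q z - Q z₀ = (z - z₀) • ((adjoint (G (conj z₀))).comp (G z))

/-- The right-hand side `R z - G z Γ z (G z̄)*` of Krein's resolvent formula. -/
noncomputable def kreinResolvent (R : ℂ → H →L[ℂ] H) (G : ℂ → K →L[ℂ] H) (Γ : ℂ → K →L[ℂ] K)
    (z : ℂ) : H →L[ℂ] H :=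
  R z - (G z).comp ((Γ z).comp (adjoint (G (conj z))))

variable {R : ℂ → H →L[ℂ] H} {G : ℂ → K →L[ℂ] H} {Q Γ : ℂ → K →L[ℂ] K} {L : K →ₗ.[ℂ] K}
  {z w : ℂ}

theorem IsGammaField.smul_adjoint_comp (hG : IsGammaField R G)
    (hR : ∀ z : ℂ, z.im ≠ 0 → adjoint (R z) = R (conj z)) (hz : z.im ≠ 0) (hw : w.im ≠ 0) :
    (z - w) • (adjoint (G (conj z)) ∘L R w) = adjoint (G (conj z)) - adjoint (G (conj w)) := by
  have hadj := congrArg adjoint (hG (conj w) (conj z) (conj_im_ne_zero hw) (conj_im_ne_zero hz))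
  simp only [map_add, map_smulₛₗ, adjoint_comp, hR _ (conj_im_ne_zero hw), conj_conj, map_sub]
    at hadj
  rw [hadj]
  module

theorem IsQFunction.smul_adjoint_comp (hQ : IsQFunction G Q) (hz : z.im ≠ 0) (hw : w.im ≠ 0) :
    (z - w) • (adjoint (G (conj z)) ∘L G w) = Q z - Q w := by
  rw [← neg_sub (Q w), hQ.2 w z hw hz]
  module

theorem IsInverseOfAdd.adjoint_eq (hΓ : IsInverseOfAdd Q L Γ) (hL : L.IsFormalAdjoint L)
    (hz : z.im ≠ 0) (hQ : adjoint (Q z) = Q (conj z)) : adjoint (Γ z) = Γ (conj z) := by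
  refine ((eq_adjoint_iff _ _).2 fun k h => ?_).symm
  obtain ⟨hmem, hright, -⟩ := hΓ z hz
  obtain ⟨hmem', hright', -⟩ := hΓ (conj z) (conj_im_ne_zero hz)
  calc ⟪Γ (conj z) k, h⟫_ℂ
      = ⟪Γ (conj z) k, Q z (Γ z h) + L ⟨Γ z h, hmem h⟩⟫_ℂ := by rw [hright]
    _ = ⟪Q (conj z) (Γ (conj z) k) + L ⟨Γ (conj z) k, hmem' k⟩, Γ z h⟫_ℂ := by
      rw [inner_add_left, inner_add_right, ← hQ, adjoint_inner_left]
      exact congrArg _ (hL ⟨_, hmem' k⟩ ⟨_, hmem h⟩).symm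
    _ = ⟪k, Γ z h⟫_ℂ := by rw [hright']

theorem adjoint_kreinResolvent (hR : adjoint (R z) = R (conj z))
    (hΓ : adjoint (Γ z) = Γ (conj z)) :
    adjoint (kreinResolvent R G Γ z) = kreinResolvent R G Γ (conj z) := by
  simp only [kreinResolvent, map_sub, adjoint_comp, adjoint_adjoint, hR, hΓ, conj_conj, comp_assoc]

theorem isPseudoResolvent_kreinResolvent (hR : IsPseudoResolvent R)
    (hRadj : ∀ z : ℂ, z.im ≠ 0 → adjoint (R z) = R (conj z)) (hG : IsGammaField R G)
    (hQ : IsQFunction G Q) (hΓ : IsInverseOfAdd Q L Γ) :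
    IsPseudoResolvent (kreinResolvent R G Γ) := by
  intro z w hz hw
  ext h
  set k := Γ w (adjoint (G (conj w)) h) with hk
  have hRR : R z h - R w h = (z - w) • R z (R w h) := DFunLike.congr_fun (hR z w hz hw) h
  have hRG : G z k = G w k + (z - w) • R z (G w k) := DFunLike.congr_fun (hG z w hz hw) k
  have hGR : (z - w) • G z (Γ z (adjoint (G (conj z)) (R w h)))
      = G z (Γ z (adjoint (G (conj z)) h)) - G z (Γ z (adjoint (G (conj w)) h)) := by
    simpa only [comp_apply, smul_apply, sub_apply, map_smul, map_sub] using
      congrArg (G z ∘L Γ z) (DFunLike.congr_fun (hG.smul_adjoint_comp hRadj hz hw) h)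
  have hGG : (z - w) • G z (Γ z (adjoint (G (conj z)) (G w k)))
      = G z k - G z (Γ z (adjoint (G (conj w)) h)) := by
    rw [← map_sub, hk, ← hΓ.apply_sub_apply hz hw, ← hQ.smul_adjoint_comp hz hw]
    simp only [smul_apply, comp_apply, map_smul]
  simp only [kreinResolvent, sub_apply, smul_apply, comp_apply, map_sub, ← hk]
  linear_combination (norm := module) hRR - hRG + hGR - hGG

theorem range_sub_kreinResolvent_le (R : ℂ → H →L[ℂ] H) (G : ℂ → K →L[ℂ] H)
    (Γ : ℂ → K →L[ℂ] K) (z : ℂ) : (R z - kreinResolvent R G Γ z).range ≤ (G z).range := by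
  rw [kreinResolvent, sub_sub_cancel]
  exact LinearMap.range_comp_le_range _ _

end KreinFormula

theorem stmt1_general {H K : Type*} [NormedAddCommGroup H] [InnerProductSpace ℂ H]
    [CompleteSpace H] [NormedAddCommGroup K] [InnerProductSpace ℂ K] [CompleteSpace K]
    {A : H →ₗ.[ℂ] H} (hA : A.IsFormalAdjoint A) {R : ℂ → H →L[ℂ] H} (hR : IsResolvent A R)
    {G : ℂ → K →L[ℂ] H} (hG : IsGammaField R G) {z₀ : ℂ} (hz₀ : z₀.im ≠ 0)
    (hdisj : (A.domain : Set H) ∩ closure (Set.range (G z₀)) = {0})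
    {Q : ℂ → K →L[ℂ] K} (hQ : IsQFunction G Q)
    {L : K →ₗ.[ℂ] K} (hL : L.IsFormalAdjoint L)
    {Γ : ℂ → K →L[ℂ] K} (hΓ : IsInverseOfAdd Q L Γ) :
    ∃ A₁ : H →ₗ.[ℂ] H, Dense (A₁.domain : Set H) ∧ A₁.adjoint = A₁ ∧
      IsResolvent A₁ (kreinResolvent R G Γ) ∧ IsSingularPerturbation A A₁ := by
  set S := kreinResolvent R G Γ
  have hRadj : ∀ z : ℂ, z.im ≠ 0 → adjoint (R z) = R (conj z) := fun z => hR.adjoint_eq hA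
  have hSadj : adjoint (S z₀) = S (conj z₀) :=
    adjoint_kreinResolvent (hRadj z₀ hz₀) (hΓ.adjoint_eq hL hz₀ (hQ.1 z₀ hz₀))
  have hdisjG : Disjoint A.domain (G z₀).range.topologicalClosure :=
    Submodule.disjoint_def.2 fun x hx hxG => hdisj.subset ⟨hx, hxG⟩
  have hdisjS : Disjoint A.domain (R z₀ - S z₀).range.topologicalClosure :=
    hdisjG.mono_right (Submodule.topologicalClosure_mono (range_sub_kreinResolvent_le R G Γ z₀))
  have hinj : Function.Injective (S z₀) :=
    hR.injective_of_disjoint hz₀ (hdisjS.mono_right (Submodule.le_topologicalClosure _))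
  have hS : IsResolvent (operatorOfResolventAt (S z₀) z₀) S :=
    (isPseudoResolvent_kreinResolvent hR.isPseudoResolvent hRadj hG hQ hΓ)
      |>.isResolvent_operatorOfResolventAt hz₀ hinj
  have hA₁ := hS.isFormalAdjoint hz₀ hSadj
  have hA₁adj := hS.adjoint_operator_eq_self hA₁
  exact ⟨_, IsSelfAdjoint.dense_domain hA₁adj, hA₁adj, hS,
    hR.isSingularPerturbation hA hS hA₁ hz₀ hdisjS⟩

/-- Theorem 1.1 of the paper, Krein's formula. Let `A` be a densely defined
self-adjoint operator in a complex Hilbert space `H` with resolvent `R z` (for nonreal `z`),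
and let `G`, `Q`, `L`, `Γ` be as in the hypotheses: `G z = G z₀ + (z - z₀) • R z ∘ G z₀`,
each `G z` injective, the domain of `A` meets the closure of the range of `G z₀` only in `0`;
`(Q z)* = Q z̄` and `Q z - Q z₀ = (z - z₀) • (G z̄₀)* ∘ G z`; `L` is a densely defined
self-adjoint operator in `K` and `Γ z` is a two-sided bounded inverse of `Q z + L`.
Then `R_L z = R z - G z ∘ Γ z ∘ (G z̄)*` is the resolvent of a densely defined self-adjoint
operator `A₁` in `H` which is a singular perturbation of `A`: the intersection of the domains
is dense and `A₁ = A` there. -/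
theorem stmt1 {H K : Type*} [NormedAddCommGroup H] [InnerProductSpace ℂ H] [CompleteSpace H]
    [NormedAddCommGroup K] [InnerProductSpace ℂ K] [CompleteSpace K]
    (A : H →ₗ.[ℂ] H) (hAdense : Dense (A.domain : Set H)) (hAsa : A.adjoint = A)
    (R : ℂ → H →L[ℂ] H)
    (hR : ∀ z : ℂ, z.im ≠ 0 →
      Function.Injective (R z) ∧ Set.range (R z) = (A.domain : Set H) ∧
      (∀ (h : H) (hm : R z h ∈ A.domain), A ⟨R z h, hm⟩ - z • R z h = h))
    (G : ℂ → K →L[ℂ] H)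
    (hG1 : ∀ z z₀ : ℂ, z.im ≠ 0 → z₀.im ≠ 0 →
      G z = G z₀ + (z - z₀) • ((R z).comp (G z₀)))
    (hG2 : ∀ z : ℂ, z.im ≠ 0 → Function.Injective (G z))
    (hG3 : ∀ z₀ : ℂ, z₀.im ≠ 0 →
      (A.domain : Set H) ∩ closure (Set.range (G z₀)) = {0})
    (Q : ℂ → K →L[ℂ] K)
    (hQ1 : ∀ z : ℂ, z.im ≠ 0 → adjoint (Q z) = Q (starRingEnd ℂ z))
    (hQ2 : ∀ z z₀ : ℂ, z.im ≠ 0 → z₀.im ≠ 0 →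
      Q z - Q z₀ = (z - z₀) • ((adjoint (G (starRingEnd ℂ z₀))).comp (G z)))
    (L : K →ₗ.[ℂ] K) (hLdense : Dense (L.domain : Set K)) (hLsa : L.adjoint = L)
    (Γ : ℂ → K →L[ℂ] K)
    (hΓ : ∀ z : ℂ, z.im ≠ 0 →
      (∀ k : K, Γ z k ∈ L.domain) ∧
      (∀ (k : K) (hm : Γ z k ∈ L.domain), Q z (Γ z k) + L ⟨Γ z k, hm⟩ = k) ∧
      (∀ u : L.domain, Γ z (Q z (u : K) + L u) = (u : K))) :
    ∃ A₁ : H →ₗ.[ℂ] H, Dense (A₁.domain : Set H) ∧ A₁.adjoint = A₁ ∧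
      (∀ z : ℂ, z.im ≠ 0 →
        Function.Injective
          (R z - (G z).comp ((Γ z).comp (adjoint (G (starRingEnd ℂ z))))) ∧
        Set.range (R z - (G z).comp ((Γ z).comp (adjoint (G (starRingEnd ℂ z)))))
          = (A₁.domain : Set H) ∧
        (∀ (h : H)
          (hm : (R z - (G z).comp ((Γ z).comp (adjoint (G (starRingEnd ℂ z))))) h ∈ A₁.domain),
          A₁ ⟨(R z - (G z).comp ((Γ z).comp (adjoint (G (starRingEnd ℂ z))))) h, hm⟩
            - z • (R z - (G z).comp ((Γ z).comp (adjoint (G (starRingEnd ℂ z))))) h = h)) ∧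
      Dense ((A.domain : Set H) ∩ (A₁.domain : Set H)) ∧
      (∀ (x : H) (h1 : x ∈ A.domain) (h2 : x ∈ A₁.domain), A₁ ⟨x, h2⟩ = A ⟨x, h1⟩) := by
  have hA : A.IsFormalAdjoint A := by simpa only [hAsa] using A.adjoint_isFormalAdjoint hAdense
  have hL : L.IsFormalAdjoint L := by simpa only [hLsa] using L.adjoint_isFormalAdjoint hLdense
  exact stmt1_general hA hR hG1 (z₀ := I) (by simp) (hG3 I (by simp)) ⟨hQ1, hQ2⟩ hL hΓ
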